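/- Let μ0 be a stable matching and w a woman who has a stable partner she strictly prefers to μ0(w) (i.e., some stable matching μ* has μ*(w) ≻_w μ0(w)). Then there exists a stable matching μ' with μ' > μ0 in the woman-dominance order and μ'(w) ≻_w μ0(w). -/

import Mathlib

/-- A matching market: men `M` and women `W`; each man has a strict preference
order over `W ∪ {∅}` and each woman over `M ∪ {∅}`, encoded by injective rank
functions (a strictly higher rank means strictly more preferred); `none`
plays the role of `∅` (being unmatched), and partners ranked below `none`
are unacceptable. -/
structure Market (M W : Type*) where
  mRank : M → Option W → ℕ
  wRank : W → Option M → ℕ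
  mRank_inj : ∀ m, Function.Injective (mRank m)
  wRank_inj : ∀ w, Function.Injective (wRank w)

/-- A matching: `mu` assigns each man a woman or `none`, `nu` assigns each
woman a man or `none`, and `μ(m) = w ↔ μ(w) = m`. -/
structure Matching (M W : Type*) where
  mu : M → Option W
  nu : W → Option M
  consistent : ∀ m w, mu m = some w ↔ nu w = some m

variable {M W : Type*}

/-- Every matched agent prefers their partner to `∅`. -/
def Market.IndivRational (mkt : Market M W) (μ : Matching M W) : Prop :=
  (∀ m w, μ.mu m = some w → mkt.mRank m none < mkt.mRank m (some w)) ∧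
  (∀ w m, μ.nu w = some m → mkt.wRank w none < mkt.wRank w (some m))

/-- `(m, w)` is a blocking pair for `μ`: they are not matched to each other,
`w ≻_m μ(m)` and `m ≻_w μ(w)`. -/
def Market.Blocking (mkt : Market M W) (μ : Matching M W) (m : M) (w : W) : Prop :=
  μ.mu m ≠ some w ∧
  mkt.mRank m (μ.mu m) < mkt.mRank m (some w) ∧
  mkt.wRank w (μ.nu w) < mkt.wRank w (some m)

/-- A matching is stable if it is individually rational and has no blocking pair. -/
def Market.Stable (mkt : Market M W) (μ : Matching M W) : Prop :=
  mkt.IndivRational μ ∧ ∀ m w, ¬ mkt.Blocking μ m w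

/-- Woman-dominance: `μ ≥ μ'` iff every woman weakly prefers her partner in `μ`. -/
def Market.Dom (mkt : Market M W) (μ μ' : Matching M W) : Prop :=
  ∀ w, mkt.wRank w (μ'.nu w) ≤ mkt.wRank w (μ.nu w)

/-- Strict woman-dominance: `μ > μ'`. -/
def Market.StrictDom (mkt : Market M W) (μ μ' : Matching M W) : Prop :=
  mkt.Dom μ μ' ∧ μ ≠ μ'

/-- `μ'` covers `μ` in the woman-dominance order on stable matchings. -/
def Market.Covers (mkt : Market M W) (μ' μ : Matching M W) : Prop :=
  mkt.StrictDom μ' μ ∧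
  ¬ ∃ μ'' : Matching M W, mkt.Stable μ'' ∧ mkt.StrictDom μ' μ'' ∧ mkt.StrictDom μ'' μ

/-- `μ'` is the elimination of the list `ρ = [(w_0,m_0),…,(w_{k-1},m_{k-1})]`
from `μ`: `k ≥ 2`, the women (resp. men) in `ρ` are distinct, `μ(w_i) = m_i`,
`μ'(m_i) = w_{(i+1) mod k}`, and every agent not appearing in `ρ` has the same
partner in `μ` and `μ'`. -/
def Matching.IsElimOf (μ' μ : Matching M W) (ρ : List (W × M)) : Prop :=
  2 ≤ ρ.length ∧
  (ρ.map Prod.fst).Nodup ∧ (ρ.map Prod.snd).Nodup ∧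
  (∀ i : Fin ρ.length, μ.nu (ρ.get i).1 = some (ρ.get i).2) ∧
  (∀ i : Fin ρ.length, μ'.mu (ρ.get i).2 =
    some (ρ.get ⟨(i.1 + 1) % ρ.length,
      Nat.mod_lt _ (Nat.lt_of_le_of_lt (Nat.zero_le _) i.isLt)⟩).1) ∧
  (∀ m : M, m ∉ ρ.map Prod.snd → μ'.mu m = μ.mu m) ∧
  (∀ w : W, w ∉ ρ.map Prod.fst → μ'.nu w = μ.nu w)

/-- `ρ` is a rotation exposed in `μ`: the elimination of `ρ` from `μ` is a
stable matching which covers `μ`. -/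
def Market.ExposedRotation (mkt : Market M W) (μ : Matching M W) (ρ : List (W × M)) : Prop :=
  ∃ μ' : Matching M W, Matching.IsElimOf μ' μ ρ ∧ mkt.Stable μ' ∧ mkt.Covers μ' μ

/-- `ρ` belongs to the set `Π` of all rotations, i.e. it is exposed in some
stable matching. -/
def Market.InPi (mkt : Market M W) (ρ : List (W × M)) : Prop :=
  ∃ μ : Matching M W, mkt.Stable μ ∧ mkt.ExposedRotation μ ρ

/-- The cyclically next index in a rotation. -/
def RotNext (ρ : List (W × M)) (i : Fin ρ.length) : Fin ρ.length :=
  ⟨(i.1 + 1) % ρ.length, Nat.mod_lt _ (Nat.lt_of_le_of_lt (Nat.zero_le _) i.isLt)⟩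

/-- The cyclically previous index in a rotation. -/
def RotPrev (ρ : List (W × M)) (i : Fin ρ.length) : Fin ρ.length :=
  ⟨(i.1 + ρ.length - 1) % ρ.length, Nat.mod_lt _ (Nat.lt_of_le_of_lt (Nat.zero_le _) i.isLt)⟩

/-- `ρ` moves man `m` from `w` to `w'` (i.e. `m = m_i`, `w = w_i`, `w' = w_{i+1}`). -/
def MovesManFromTo (ρ : List (W × M)) (m : M) (w w' : W) : Prop :=
  ∃ i : Fin ρ.length, (ρ.get i).2 = m ∧ (ρ.get i).1 = w ∧ (ρ.get (RotNext ρ i)).1 = w'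

/-- `ρ` moves woman `w` from `m` to `m'` (i.e. `w = w_i`, `m = m_i`, `m' = m_{i-1}`). -/
def MovesWomanFromTo (ρ : List (W × M)) (w : W) (m m' : M) : Prop :=
  ∃ i : Fin ρ.length, (ρ.get i).1 = w ∧ (ρ.get i).2 = m ∧ (ρ.get (RotPrev ρ i)).2 = m'

/-- `ρ1` is a type 1 predecessor of `ρ2`: `ρ1` moves some man `m` to a woman
`w` and the pair `(w, m)` appears in `ρ2`. -/
def Market.Type1Pred (_mkt : Market M W) (ρ1 ρ2 : List (W × M)) : Prop :=
  ∃ (w : W) (m : M), (∃ w0 : W, MovesManFromTo ρ1 m w0 w) ∧ (w, m) ∈ ρ2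

/-- `ρ1` is a type 2 predecessor of `ρ2`: `ρ1` moves some woman `w` from a man
strictly below `m` to a man strictly above `m`, and `ρ2` moves `m` from a woman
strictly above `w` to a woman strictly below `w`. -/
def Market.Type2Pred (mkt : Market M W) (ρ1 ρ2 : List (W × M)) : Prop :=
  ∃ (m : M) (w : W) (mlo mhi : M) (whi wlo : W),
    MovesWomanFromTo ρ1 w mlo mhi ∧
    mkt.wRank w (some mlo) < mkt.wRank w (some m) ∧
    mkt.wRank w (some m) < mkt.wRank w (some mhi) ∧
    MovesManFromTo ρ2 m whi wlo ∧
    mkt.mRank m (some wlo) < mkt.mRank m (some w) ∧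
    mkt.mRank m (some w) < mkt.mRank m (some whi)

/-- `ρ1` is a (type 1 or type 2) predecessor of `ρ2`; these are the edges of
the predecessor graph `G(Π)`. -/
def Market.Pred (mkt : Market M W) (ρ1 ρ2 : List (W × M)) : Prop :=
  mkt.Type1Pred ρ1 ρ2 ∨ mkt.Type2Pred ρ1 ρ2

/-- `σ` assigns each woman the more preferred of her partners in `μ` and `μ'`. -/
def Market.IsJoin (mkt : Market M W) (μ μ' σ : Matching M W) : Prop :=
  ∀ w, σ.nu w = if mkt.wRank w (μ'.nu w) ≤ mkt.wRank w (μ.nu w) then μ.nu w else μ'.nu w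

/-- `σ` assigns each woman the less preferred of her partners in `μ` and `μ'`. -/
def Market.IsMeet (mkt : Market M W) (μ μ' σ : Matching M W) : Prop :=
  ∀ w, σ.nu w = if mkt.wRank w (μ.nu w) ≤ mkt.wRank w (μ'.nu w) then μ.nu w else μ'.nu w

/-!
Let `S` be the set of women who prefer `μ'` to `μ`, both stable. Stability of `μ` makes the
`μ'`-partner of a woman in `S` prefer his `μ`-partner, and then stability of `μ'` places that
`μ`-partner in `S` as well. So every man whom `μ'` matches into `S` is also matched into `S` by `μ`,
and giving each woman the better of her two partners is a matching. When `S` is finite, counting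
shows that `μ` and `μ'` match `S` to the same men. Hence each man's partner in this join is one of
his two original partners, and a pair blocking the join would already block `μ` or `μ'`.
-/

namespace Matching

theorem eq_of_nu_eq_some (μ : Matching M W) {w w' : W} {m : M}
    (h : μ.nu w = some m) (h' : μ.nu w' = some m) : w = w' :=
  Option.some.inj <| ((μ.consistent m w).2 h).symm.trans ((μ.consistent m w').2 h')

theorem exists_nu_eq {nu : W → Option M}
    (hnu : ∀ w w' m, nu w = some m → nu w' = some m → w = w') :
    ∃ μ : Matching M W, μ.nu = nu := by
  have partner_exists : ∀ m, ∃ o : Option W, ∀ w, o = some w ↔ nu w = some m := by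
    intro m
    by_cases h : ∃ w, nu w = some m
    · obtain ⟨w₀, hw₀⟩ := h
      refine ⟨some w₀, fun w => ⟨?_, fun hw => congrArg some (hnu w₀ w m hw₀ hw)⟩⟩
      rintro ⟨⟩
      exact hw₀
    · exact ⟨none, fun w => iff_of_false (Option.some_ne_none w).symm fun hw => h ⟨w, hw⟩⟩
  choose mu hmu using partner_exists
  exact ⟨⟨mu, nu, hmu⟩, rfl⟩

end Matching

namespace Market

variable {mkt : Market M W} {μ μ' σ : Matching M W} {m : M} {w : W}

theorem Stable.mRank_lt (hμ : mkt.Stable μ)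
    (h : mkt.wRank w (μ.nu w) < mkt.wRank w (some m)) :
    mkt.mRank m (some w) < mkt.mRank m (μ.mu m) := by
  have unmatched : μ.mu m ≠ some w := fun hm => by
    rw [(μ.consistent m w).1 hm] at h
    exact h.false
  have rank_ne : mkt.mRank m (some w) ≠ mkt.mRank m (μ.mu m) :=
    fun he => unmatched (mkt.mRank_inj m he).symm
  exact rank_ne.lt_or_gt.resolve_right fun hlt => hμ.2 m w ⟨unmatched, hlt, h⟩

theorem Stable.wRank_lt (hμ : mkt.Stable μ)
    (h : mkt.mRank m (μ.mu m) < mkt.mRank m (some w)) :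
    mkt.wRank w (some m) < mkt.wRank w (μ.nu w) := by
  have unmatched : μ.mu m ≠ some w := fun hm => by
    rw [hm] at h
    exact h.false
  have rank_ne : mkt.wRank w (some m) ≠ mkt.wRank w (μ.nu w) :=
    fun he => unmatched ((μ.consistent m w).2 (mkt.wRank_inj w he).symm)
  exact rank_ne.lt_or_gt.resolve_right fun hlt => hμ.2 m w ⟨unmatched, h, hlt⟩

theorem IndivRational.wRank_none_le (hμ : mkt.IndivRational μ) (w : W) :
    mkt.wRank w none ≤ mkt.wRank w (μ.nu w) := by
  cases h : μ.nu w with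
  | none => exact le_rfl
  | some m => exact (hμ.2 w m h).le

/-- The set of women who strictly prefer their partner in `μ'` to their partner in `μ`: those to whom
the join of `μ` and `μ'` gives the partner in `μ'`. -/
def improvingWomen (mkt : Market M W) (μ μ' : Matching M W) : Set W :=
  {w | mkt.wRank w (μ.nu w) < mkt.wRank w (μ'.nu w)}

theorem IndivRational.exists_nu_eq_some (hμ : mkt.IndivRational μ)
    (hw : w ∈ mkt.improvingWomen μ μ') : ∃ m, μ'.nu w = some m := by
  refine Option.ne_none_iff_exists'.1 fun hnone => ?_
  have hlt : mkt.wRank w (μ.nu w) < mkt.wRank w (μ'.nu w) := hw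
  rw [hnone] at hlt
  exact (hμ.wRank_none_le w).not_gt hlt

theorem Stable.exists_mem_improvingWomen (hμ : mkt.Stable μ) (hμ' : mkt.Stable μ')
    (hw : w ∈ mkt.improvingWomen μ μ') (hm : μ'.nu w = some m) :
    ∃ v ∈ mkt.improvingWomen μ μ', μ.nu v = some m := by
  have hmu' : μ'.mu m = some w := (μ'.consistent m w).2 hm
  have man_loses : mkt.mRank m (some w) < mkt.mRank m (μ.mu m) := hμ.mRank_lt (hm ▸ hw)
  cases hmu : μ.mu m with
  | none =>
    rw [hmu] at man_loses
    exact absurd man_loses (hμ'.1.1 m w hmu').not_gt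
  | some v =>
    have hv : μ.nu v = some m := (μ.consistent m v).1 hmu
    have v_improves : mkt.wRank v (some m) < mkt.wRank v (μ'.nu v) :=
      hμ'.wRank_lt (by rwa [hmu', ← hmu])
    exact ⟨v, by rwa [← hv] at v_improves, hv⟩

theorem Stable.image_nu_improvingWomen (hμ : mkt.Stable μ) (hμ' : mkt.Stable μ')
    (hfin : (mkt.improvingWomen μ μ').Finite) :
    μ'.nu '' mkt.improvingWomen μ μ' = μ.nu '' mkt.improvingWomen μ μ' := by
  have image_subset :
      μ'.nu '' mkt.improvingWomen μ μ' ⊆ μ.nu '' mkt.improvingWomen μ μ' := by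
    rintro _ ⟨w, hw, rfl⟩
    obtain ⟨m, hm⟩ := hμ.1.exists_nu_eq_some hw
    obtain ⟨v, hv, hvm⟩ := hμ.exists_mem_improvingWomen hμ' hw hm
    exact ⟨v, hv, hvm.trans hm.symm⟩
  have nu_injOn : Set.InjOn μ'.nu (mkt.improvingWomen μ μ') := by
    intro v hv w _ heq
    obtain ⟨m, hm⟩ := hμ.1.exists_nu_eq_some hv
    exact μ'.eq_of_nu_eq_some hm (heq.symm.trans hm)
  refine Set.eq_of_subset_of_ncard_le image_subset ?_ (hfin.image _)
  rw [nu_injOn.ncard_image]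
  exact Set.ncard_image_le hfin

theorem Stable.exists_isJoin (hμ : mkt.Stable μ) (hμ' : mkt.Stable μ') :
    ∃ σ, mkt.IsJoin μ μ' σ := by
  have no_conflict {v w : W} {m : M} (hv : mkt.wRank v (μ'.nu v) ≤ mkt.wRank v (μ.nu v))
      (hw : ¬ mkt.wRank w (μ'.nu w) ≤ mkt.wRank w (μ.nu w))
      (hvm : μ.nu v = some m) (hwm : μ'.nu w = some m) : False := by
    obtain ⟨u, hu, hum⟩ := hμ.exists_mem_improvingWomen hμ' (lt_of_not_ge hw) hwm
    obtain rfl := μ.eq_of_nu_eq_some hum hvm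
    exact hv.not_gt hu
  obtain ⟨σ, hσ⟩ := Matching.exists_nu_eq
    (nu := fun w => if mkt.wRank w (μ'.nu w) ≤ mkt.wRank w (μ.nu w) then μ.nu w else μ'.nu w)
    (by
      intro v w m hvm hwm
      split_ifs at hvm hwm with hv hw hw
      · exact μ.eq_of_nu_eq_some hvm hwm
      · exact (no_conflict hv hw hvm hwm).elim
      · exact (no_conflict hw hv hwm hvm).elim
      · exact μ'.eq_of_nu_eq_some hvm hwm)
  exact ⟨σ, congrFun hσ⟩

theorem IsJoin.nu_eq_or (hσ : mkt.IsJoin μ μ' σ) (w : W) :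
    σ.nu w = μ.nu w ∨ σ.nu w = μ'.nu w := by
  rw [hσ w]
  exact ite_eq_or_eq _ _ _

theorem IsJoin.wRank_nu (hσ : mkt.IsJoin μ μ' σ) (w : W) :
    mkt.wRank w (σ.nu w) = max (mkt.wRank w (μ.nu w)) (mkt.wRank w (μ'.nu w)) := by
  rw [hσ w, apply_ite (mkt.wRank w), max_comm, max_def]

theorem IsJoin.dom_left (hσ : mkt.IsJoin μ μ' σ) : mkt.Dom σ μ :=
  fun w => (le_max_left _ _).trans_eq (hσ.wRank_nu w).symm

theorem IsJoin.dom_right (hσ : mkt.IsJoin μ μ' σ) : mkt.Dom σ μ' :=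
  fun w => (le_max_right _ _).trans_eq (hσ.wRank_nu w).symm

theorem IsJoin.exists_nu_eq_some_of_left (hσ : mkt.IsJoin μ μ' σ) (hμ : mkt.Stable μ)
    (hμ' : mkt.Stable μ') (hfin : (mkt.improvingWomen μ μ').Finite) (hm : μ.nu w = some m) :
    ∃ v, σ.nu v = some m := by
  by_cases hw : mkt.wRank w (μ'.nu w) ≤ mkt.wRank w (μ.nu w)
  · exact ⟨w, by rw [hσ w, if_pos hw, hm]⟩
  · have mem_image : some m ∈ μ'.nu '' mkt.improvingWomen μ μ' := by
      rw [hμ.image_nu_improvingWomen hμ' hfin]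
      exact ⟨w, lt_of_not_ge hw, hm⟩
    obtain ⟨v, hv, hvm⟩ := mem_image
    exact ⟨v, by rw [hσ v, if_neg (not_le_of_gt hv), hvm]⟩

theorem IsJoin.mu_eq_or (hσ : mkt.IsJoin μ μ' σ) (hμ : mkt.Stable μ) (hμ' : mkt.Stable μ')
    (hfin : (mkt.improvingWomen μ μ').Finite) (m : M) :
    σ.mu m = μ.mu m ∨ σ.mu m = μ'.mu m := by
  cases hσm : σ.mu m with
  | some w =>
    have hw : σ.nu w = some m := (σ.consistent m w).1 hσm
    exact (hσ.nu_eq_or w).imp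
      (fun h => ((μ.consistent m w).2 (h.symm.trans hw)).symm)
      (fun h => ((μ'.consistent m w).2 (h.symm.trans hw)).symm)
  | none =>
    refine Or.inl (Option.eq_none_iff_forall_ne_some.2 fun w hμm => ?_).symm
    obtain ⟨v, hv⟩ :=
      hσ.exists_nu_eq_some_of_left hμ hμ' hfin ((μ.consistent m w).1 hμm)
    exact Option.some_ne_none v (((σ.consistent m v).2 hv).symm.trans hσm)

theorem IsJoin.stable (hσ : mkt.IsJoin μ μ' σ) (hμ : mkt.Stable μ) (hμ' : mkt.Stable μ')
    (hfin : (mkt.improvingWomen μ μ').Finite) : mkt.Stable σ := by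
  have mu_eq_or := hσ.mu_eq_or hμ hμ' hfin
  refine ⟨⟨fun m w hm => ?_, fun w m hw => ?_⟩, ?_⟩
  · exact (mu_eq_or m).elim (fun h => hμ.1.1 m w (h.symm.trans hm))
      (fun h => hμ'.1.1 m w (h.symm.trans hm))
  · exact (hσ.nu_eq_or w).elim (fun h => hμ.1.2 w m (h.symm.trans hw))
      (fun h => hμ'.1.2 w m (h.symm.trans hw))
  · rintro m w ⟨unmatched, man_gains, woman_gains⟩
    rcases mu_eq_or m with h | h <;> rw [h] at unmatched man_gains
    · exact hμ.2 m w ⟨unmatched, man_gains, (hσ.dom_left w).trans_lt woman_gains⟩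
    · exact hμ'.2 m w ⟨unmatched, man_gains, (hσ.dom_right w).trans_lt woman_gains⟩

end Market

theorem can_move_up_in_lattice_general {mkt : Market M W} {μ0 μs : Matching M W}
    (h0 : mkt.Stable μ0) (hs : mkt.Stable μs) (hfin : (mkt.improvingWomen μ0 μs).Finite)
    {w : W} (hw : mkt.wRank w (μ0.nu w) < mkt.wRank w (μs.nu w)) :
    ∃ μ' : Matching M W, mkt.Stable μ' ∧ mkt.StrictDom μ' μ0 ∧
      mkt.wRank w (μ0.nu w) < mkt.wRank w (μ'.nu w) := by
  obtain ⟨σ, hσ⟩ := h0.exists_isJoin hs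
  have woman_gains : mkt.wRank w (μ0.nu w) < mkt.wRank w (σ.nu w) :=
    hw.trans_le (hσ.dom_right w)
  refine ⟨σ, hσ.stable h0 hs hfin, ⟨hσ.dom_left, ?_⟩, woman_gains⟩
  rintro rfl
  exact woman_gains.false

/-- if some stable matching gives `w` a partner she strictly
prefers to `μ0(w)`, then there is a stable `μ'` with `μ' > μ0` in the
woman-dominance order and `μ'(w) ≻_w μ0(w)`. -/
theorem can_move_up_in_lattice {M W : Type*} [Fintype M] [Fintype W]
    (mkt : Market M W) (μ0 : Matching M W) (h0 : mkt.Stable μ0) (w : W)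
    (hbetter : ∃ μs : Matching M W, mkt.Stable μs ∧
      mkt.wRank w (μ0.nu w) < mkt.wRank w (μs.nu w)) :
    ∃ μ' : Matching M W, mkt.Stable μ' ∧ mkt.StrictDom μ' μ0 ∧
      mkt.wRank w (μ0.nu w) < mkt.wRank w (μ'.nu w) := by
  obtain ⟨μs, hs, hw⟩ := hbetter
  exact can_move_up_in_lattice_general h0 hs (Set.toFinite _) hw
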